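/- Let p̄ = (p(1), p(2), …) be a sequence of reals with 0 ≤ p(i) < 1 for all i, such that log(∏_{i=1}^n (1 − p(i))) / log n → 0 as n → ∞. Then for every first-order sentence ψ of the language L, the limit lim_{n→∞} Prob(n,p̄;ψ) exists and equals 0 or 1. -/

import Mathlib

open FirstOrder Filter

namespace RandomGraph

/-- The set of potential edges of a graph on `Fin n` (pairs `(v,w)` with `v < w`).
Vertex `v : Fin n` represents the number `v + 1` of the interval `[n] = {1, …, n}`. -/
abbrev EdgeIdx (n : ℕ) := {e : Fin n × Fin n // e.1 < e.2}

/-- An outcome of the random graph on `[n]`: a choice of which potential edges are present. -/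
abbrev Sample (n : ℕ) := EdgeIdx n → Bool

/-- Adjacency of two vertices (described by their values in `Fin n`) in the outcome `ω`. -/
def adjVal {n : ℕ} (ω : Sample n) (a b : ℕ) : Prop :=
  ∃ e : EdgeIdx n, ω e = true ∧
    ((e.1.1.val = a ∧ e.1.2.val = b) ∨ (e.1.1.val = b ∧ e.1.2.val = a))

/-- Adjacency of two vertices in the outcome `ω`. -/
def sampleAdj {n : ℕ} (ω : Sample n) (v w : Fin n) : Prop := adjVal ω v.val w.val

/-- The probability of the outcome `ω` in the model `G(n, p̄)`: each pair of distinct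
vertices at distance `d` is an edge with probability `p d`, independently.  (The value `p 0` is
never used, since distinct vertices are at distance at least 1.) -/
noncomputable def sampleWeight (p : ℕ → ℝ) {n : ℕ} (ω : Sample n) : ℝ :=
  ∏ e : EdgeIdx n,
    (if ω e then p (e.1.2.val - e.1.1.val) else 1 - p (e.1.2.val - e.1.1.val))

/-- The probability of the outcome `ω` in the circular model `C(n, p̄)`: vertices `v, w` are
adjacent with probability `p (min |v-w| (n - |v-w|))`, independently. -/
noncomputable def cWeight (p : ℕ → ℝ) {n : ℕ} (ω : Sample n) : ℝ :=
  ∏ e : EdgeIdx n,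
    (if ω e then p (min (e.1.2.val - e.1.1.val) (n - (e.1.2.val - e.1.1.val)))
      else 1 - p (min (e.1.2.val - e.1.1.val) (n - (e.1.2.val - e.1.1.val))))

open scoped Classical in
/-- The probability of the event `P` in the random graph `G(n, p̄)`. -/
noncomputable def Pr (p : ℕ → ℝ) (n : ℕ) (P : Sample n → Prop) : ℝ :=
  ∑ ω : Sample n, if P ω then sampleWeight p ω else 0

open scoped Classical in
/-- The probability of the event `P` in the circular random graph `C(n, p̄)`. -/
noncomputable def cPr (p : ℕ → ℝ) (n : ℕ) (P : Sample n → Prop) : ℝ :=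
  ∑ ω : Sample n, if P ω then cWeight p ω else 0

/-! ### The language `L` of graphs (also used as the language `L^c`) -/

/-- An outcome `ω` of the random graph, viewed as a structure of `FirstOrder.Language.graph`,
the language with a single binary adjacency predicate. -/
def graphStructure {n : ℕ} (ω : Sample n) : Language.graph.Structure (Fin n) where
  RelMap | .adj => fun x => sampleAdj ω (x 0) (x 1)

/-- Satisfaction of a sentence of the language `L` in the outcome `ω`. -/
def SatL {n : ℕ} (ω : Sample n) (ψ : Language.graph.Sentence) : Prop :=
  @Language.Sentence.Realize _ _ (graphStructure ω) ψ

/-- `Prob(n, p̄; ψ)` for a sentence `ψ` of the language `L`. -/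
noncomputable def ProbL (p : ℕ → ℝ) (n : ℕ) (ψ : Language.graph.Sentence) : ℝ :=
  Pr p n fun ω => SatL ω ψ

/-- The probability that `C(n, p̄)` satisfies a sentence `ψ` of the language `L^c = L`. -/
noncomputable def cProbL (p : ℕ → ℝ) (n : ℕ) (ψ : Language.graph.Sentence) : ℝ :=
  cPr p n fun ω => SatL ω ψ

/-! ### The language `L₊` -/

/-- The constants of the language `L₊`: the first element `1` and the last element `n`. -/
inductive plusFunc : ℕ → Type
  | one : plusFunc 0
  | last : plusFunc 0

/-- The relations of `L₊`: adjacency and successor. -/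
inductive plusRel : ℕ → Type
  | adj : plusRel 2
  | succ : plusRel 2

/-- The language `L₊` with adjacency, successor (`x = y + 1`), and constants `1` and `n`. -/
def Lplus : Language := ⟨plusFunc, plusRel⟩

/-- An outcome `ω` of the random graph on `[m+1]`, as an `L₊`-structure. -/
def plusStructure {m : ℕ} (ω : Sample (m + 1)) : Lplus.Structure (Fin (m + 1)) where
  funMap | .one => fun _ => 0 | .last => fun _ => Fin.last m
  RelMap
    | .adj => fun x => sampleAdj ω (x 0) (x 1)
    | .succ => fun x => (x 0).val = (x 1).val + 1

/-- `Prob(n, p̄; ψ)` for a sentence `ψ` of `L₊` (set to `0` in the irrelevant case `n = 0`,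
where the constants cannot be interpreted). -/
noncomputable def ProbPlus (p : ℕ → ℝ) : ℕ → Lplus.Sentence → ℝ
  | 0, _ => 0
  | (m + 1), ψ => Pr p (m + 1) fun ω => @Language.Sentence.Realize _ _ (plusStructure ω) ψ

/-! ### The language `L≤` -/

/-- The relations of `L≤`: adjacency and linear order. -/
inductive leRel : ℕ → Type
  | adj : leRel 2
  | le : leRel 2

/-- The language `L≤` with adjacency and a linear order. -/
def Lle : Language := ⟨fun _ => Empty, leRel⟩

/-- An outcome `ω` of the random graph on `[n]`, as an `L≤`-structure. -/
def leStructure {n : ℕ} (ω : Sample n) : Lle.Structure (Fin n) where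
  funMap := fun f _ => Empty.elim f
  RelMap
    | .adj => fun x => sampleAdj ω (x 0) (x 1)
    | .le => fun x => x 0 ≤ x 1

/-- Satisfaction of a sentence of `L≤` in the outcome `ω`. -/
def SatLe {n : ℕ} (ω : Sample n) (ψ : Lle.Sentence) : Prop :=
  @Language.Sentence.Realize _ _ (leStructure ω) ψ

/-- `Prob(n, p̄; ψ)` for a sentence `ψ` of `L≤`. -/
noncomputable def ProbLe (p : ℕ → ℝ) (n : ℕ) (ψ : Lle.Sentence) : ℝ :=
  Pr p n fun ω => SatLe ω ψ

/-! ### The circular languages `L₊^c` and `L≤^c` -/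

/-- The relations of `L₊^c`: adjacency and cyclic successor. -/
inductive plusCRel : ℕ → Type
  | adj : plusCRel 2
  | succ : plusCRel 2

/-- The language `L₊^c`, with adjacency and cyclic successor (`x = y + 1 (mod n)`). -/
def LplusC : Language := ⟨fun _ => Empty, plusCRel⟩

/-- An outcome `ω` of the circular random graph on `[n]`, as an `L₊^c`-structure. -/
def plusCStructure {n : ℕ} (ω : Sample n) : LplusC.Structure (Fin n) where
  funMap := fun f _ => Empty.elim f
  RelMap
    | .adj => fun x => sampleAdj ω (x 0) (x 1)
    | .succ => fun x => (x 0).val = ((x 1).val + 1) % n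

/-- The probability that `C(n, p̄)` satisfies a sentence `ψ` of the language `L₊^c`. -/
noncomputable def cProbPlus (p : ℕ → ℝ) (n : ℕ) (ψ : LplusC.Sentence) : ℝ :=
  cPr p n fun ω => @Language.Sentence.Realize _ _ (plusCStructure ω) ψ

/-- The relations of `L≤^c`: adjacency and the ternary clockwise-order predicate. -/
inductive cycRel : ℕ → Type
  | adj : cycRel 2
  | btw : cycRel 3

/-- The language `L≤^c`, with adjacency and the ternary clockwise-order predicate `C`. -/
def Lcyc : Language := ⟨fun _ => Empty, cycRel⟩

/-- `C(a, b, c)`: `a ≤ b ≤ c` holds after some cyclic permutation of `(a, b, c)`. -/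
def cyclicBtw {n : ℕ} (a b c : Fin n) : Prop :=
  (a ≤ b ∧ b ≤ c) ∨ (b ≤ c ∧ c ≤ a) ∨ (c ≤ a ∧ a ≤ b)

/-- An outcome `ω` of the circular random graph on `[n]`, as an `L≤^c`-structure. -/
def cycStructure {n : ℕ} (ω : Sample n) : Lcyc.Structure (Fin n) where
  funMap := fun f _ => Empty.elim f
  RelMap
    | .adj => fun x => sampleAdj ω (x 0) (x 1)
    | .btw => fun x => cyclicBtw (x 0) (x 1) (x 2)

/-- Satisfaction of a sentence of `L≤^c` in the outcome `ω`. -/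
def SatCyc {n : ℕ} (ω : Sample n) (ψ : Lcyc.Sentence) : Prop :=
  @Language.Sentence.Realize _ _ (cycStructure ω) ψ

/-- The probability that `C(n, p̄)` satisfies a sentence `ψ` of the language `L≤^c`. -/
noncomputable def cProbCyc (p : ℕ → ℝ) (n : ℕ) (ψ : Lcyc.Sentence) : ℝ :=
  cPr p n fun ω => SatCyc ω ψ

/-!
Fix a quantifier rank `k`. Under disjoint union, the rank-`k` theories of graphs form a finite
commutative monoid in which `a ^ (k + 1) = a ^ k`, because `k` moves of an Ehrenfeucht–Fraïssé game
visit at most `k` of the copies of a graph. In such a monoid mutual divisibility implies equality.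

Let `H` be a graph on `n` vertices that occurs with positive probability. An interval of `n`
consecutive vertices of `G(m, p̄)` spans an isolated copy of `H` with probability `m ^ (-o(1))`,
since only `O(n)` potential edges of each length must be absent. There are about `m / n` disjoint
intervals and these events are weakly correlated, so by the second moment method some isolated
copy exists asymptotically almost surely, and the theory of `H` divides that of `G(m, p̄)`.
As there are only finitely many theories, one attainable theory is divisible by all the others, and
`G(m, p̄)` has this theory asymptotically almost surely.
-/

/-! ### The Ehrenfeucht–Fraïssé game -/

section Game

variable {V W X V' W' : Type*} {G : SimpleGraph V} {H : SimpleGraph W} {K : SimpleGraph X}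
  {G' : SimpleGraph V'} {H' : SimpleGraph W'} {k : ℕ}

/-- A position of the Ehrenfeucht–Fraïssé game, given as the set of pairs of pebbled vertices, is a
partial isomorphism. -/
def IsPartialIso (G : SimpleGraph V) (H : SimpleGraph W) (P : Set (V × W)) : Prop :=
  ∀ x ∈ P, ∀ y ∈ P, (x.1 = y.1 ↔ x.2 = y.2) ∧ (G.Adj x.1 y.1 ↔ H.Adj x.2 y.2)

/-- Duplicator has a winning strategy in the `k`-round Ehrenfeucht–Fraïssé game on `G` and `H`
continuing from the position `P`. -/
def DuplicatorWins (G : SimpleGraph V) (H : SimpleGraph W) : ℕ → Set (V × W) → Prop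
  | 0, P => IsPartialIso G H P
  | k + 1, P => IsPartialIso G H P ∧ (∀ v, ∃ w, DuplicatorWins G H k (insert (v, w) P)) ∧
      ∀ w, ∃ v, DuplicatorWins G H k (insert (v, w) P)

theorem IsPartialIso.mono {P Q : Set (V × W)} (hQ : IsPartialIso G H Q) (hPQ : P ⊆ Q) :
    IsPartialIso G H P :=
  fun x hx y hy => hQ x (hPQ hx) y (hPQ hy)

theorem IsPartialIso.symm {P : Set (V × W)} (hP : IsPartialIso G H P) :
    IsPartialIso H G (Prod.swap ⁻¹' P) :=
  fun _ hx _ hy => (hP _ hx _ hy).imp Iff.symm Iff.symm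

namespace DuplicatorWins

theorem isPartialIso {P : Set (V × W)} (h : DuplicatorWins G H k P) : IsPartialIso G H P := by
  cases k with
  | zero => exact h
  | succ k => exact h.1

theorem mono {P Q : Set (V × W)} (hQ : DuplicatorWins G H k Q) (hPQ : P ⊆ Q) :
    DuplicatorWins G H k P := by
  induction k generalizing P Q with
  | zero => exact IsPartialIso.mono hQ hPQ
  | succ k ih =>
    refine ⟨hQ.1.mono hPQ, fun v => ?_, fun w => ?_⟩
    · obtain ⟨w, hw⟩ := hQ.2.1 v
      exact ⟨w, ih hw (Set.insert_subset_insert hPQ)⟩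
    · obtain ⟨v, hv⟩ := hQ.2.2 w
      exact ⟨v, ih hv (Set.insert_subset_insert hPQ)⟩

theorem of_backAndForth {S : ℕ → Set (Set (V × W))}
    (isPartialIso : ∀ k, ∀ P ∈ S k, IsPartialIso G H P)
    (forth : ∀ k, ∀ P ∈ S (k + 1), ∀ v, ∃ w, ∃ Q ∈ S k, insert (v, w) P ⊆ Q)
    (back : ∀ k, ∀ P ∈ S (k + 1), ∀ w, ∃ v, ∃ Q ∈ S k, insert (v, w) P ⊆ Q)
    {P : Set (V × W)} (hP : P ∈ S k) : DuplicatorWins G H k P := by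
  induction k generalizing P with
  | zero => exact isPartialIso 0 P hP
  | succ k ih =>
    refine ⟨isPartialIso _ P hP, fun v => ?_, fun w => ?_⟩
    · obtain ⟨w, Q, hQ, hPQ⟩ := forth k P hP v
      exact ⟨w, (ih hQ).mono hPQ⟩
    · obtain ⟨v, Q, hQ, hPQ⟩ := back k P hP w
      exact ⟨v, (ih hQ).mono hPQ⟩

theorem of_succ {P : Set (V × W)} (h : DuplicatorWins G H (k + 1) P) : DuplicatorWins G H k P := by
  refine of_backAndForth (S := fun k => {P | DuplicatorWins G H (k + 1) P})
    (fun k P hP => hP.1) (fun k P hP v => ?_) (fun k P hP w => ?_) h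
  · obtain ⟨w, hw⟩ := hP.2.1 v
    exact ⟨w, _, hw, subset_rfl⟩
  · obtain ⟨v, hv⟩ := hP.2.2 w
    exact ⟨v, _, hv, subset_rfl⟩

theorem of_iso (f : G ≃g H) (k : ℕ) : DuplicatorWins G H k (Set.range fun v => (v, f v)) := by
  refine of_backAndForth (S := fun _ => {P | P = Set.range fun v => (v, f v)}) ?_ ?_ ?_ rfl
  · rintro _ _ rfl _ ⟨v, rfl⟩ _ ⟨v', rfl⟩
    exact ⟨f.injective.eq_iff.symm, f.map_adj_iff.symm⟩
  · rintro _ _ rfl v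
    exact ⟨f v, _, rfl, Set.insert_subset ⟨v, rfl⟩ subset_rfl⟩
  · rintro _ _ rfl w
    exact ⟨f.symm w, _, rfl, Set.insert_subset ⟨f.symm w, by simp⟩ subset_rfl⟩

theorem symm {P : Set (V × W)} (h : DuplicatorWins G H k P) :
    DuplicatorWins H G k (Prod.swap ⁻¹' P) := by
  refine of_backAndForth (S := fun k => {Q | ∃ P, DuplicatorWins G H k P ∧ Prod.swap ⁻¹' P = Q})
    ?_ ?_ ?_ ⟨P, h, rfl⟩
  · rintro k _ ⟨P, hP, rfl⟩
    exact hP.isPartialIso.symm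
  · rintro k _ ⟨P, hP, rfl⟩ w
    obtain ⟨v, hv⟩ := hP.2.2 w
    exact ⟨v, _, ⟨_, hv, rfl⟩, by grind⟩
  · rintro k _ ⟨P, hP, rfl⟩ v
    obtain ⟨w, hw⟩ := hP.2.1 v
    exact ⟨w, _, ⟨_, hw, rfl⟩, by grind⟩

theorem trans {P : Set (V × W)} {Q : Set (W × X)} (hP : DuplicatorWins G H k P)
    (hQ : DuplicatorWins H K k Q) :
    DuplicatorWins G K k {z | ∃ w, (z.1, w) ∈ P ∧ (w, z.2) ∈ Q} := by
  refine of_backAndForth (S := fun k => {R | ∃ P Q, DuplicatorWins G H k P ∧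
    DuplicatorWins H K k Q ∧ {z | ∃ w, (z.1, w) ∈ P ∧ (w, z.2) ∈ Q} = R})
    ?_ ?_ ?_ ⟨P, Q, hP, hQ, rfl⟩
  · rintro k _ ⟨P, Q, hP, hQ, rfl⟩ x ⟨w, hwP, hwQ⟩ y ⟨w', hwP', hwQ'⟩
    obtain ⟨eqP, adjP⟩ := hP.isPartialIso _ hwP _ hwP'
    obtain ⟨eqQ, adjQ⟩ := hQ.isPartialIso _ hwQ _ hwQ'
    exact ⟨eqP.trans eqQ, adjP.trans adjQ⟩
  · rintro k _ ⟨P, Q, hP, hQ, rfl⟩ v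
    obtain ⟨w, hw⟩ := hP.2.1 v
    obtain ⟨x, hx⟩ := hQ.2.1 w
    exact ⟨x, _, ⟨_, _, hw, hx, rfl⟩, by grind⟩
  · rintro k _ ⟨P, Q, hP, hQ, rfl⟩ x
    obtain ⟨w, hw⟩ := hQ.2.2 x
    obtain ⟨v, hv⟩ := hP.2.2 w
    exact ⟨v, _, ⟨_, _, hv, hw, rfl⟩, by grind⟩

end DuplicatorWins

theorem IsPartialIso.sum {P : Set (V × W)} {Q : Set (V' × W')} (hP : IsPartialIso G H P)
    (hQ : IsPartialIso G' H' Q) :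
    IsPartialIso (G ⊕g G') (H ⊕g H') (Prod.map .inl .inl '' P ∪ Prod.map .inr .inr '' Q) := by
  rintro _ (⟨x, hx, rfl⟩ | ⟨x, hx, rfl⟩) _ (⟨y, hy, rfl⟩ | ⟨y, hy, rfl⟩)
  · simpa using hP x hx y hy
  · simp
  · simp
  · simpa using hQ x hx y hy

theorem DuplicatorWins.sum {P : Set (V × W)} {Q : Set (V' × W')} (hP : DuplicatorWins G H k P)
    (hQ : DuplicatorWins G' H' k Q) :
    DuplicatorWins (G ⊕g G') (H ⊕g H') k (Prod.map .inl .inl '' P ∪ Prod.map .inr .inr '' Q) := by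
  refine of_backAndForth (S := fun k => {R | ∃ P Q, DuplicatorWins G H k P ∧
    DuplicatorWins G' H' k Q ∧ Prod.map .inl .inl '' P ∪ Prod.map .inr .inr '' Q = R})
    ?_ ?_ ?_ ⟨P, Q, hP, hQ, rfl⟩
  · rintro k _ ⟨P, Q, hP, hQ, rfl⟩
    exact hP.isPartialIso.sum hQ.isPartialIso
  · rintro k _ ⟨P, Q, hP, hQ, rfl⟩ (v | v)
    · obtain ⟨w, hw⟩ := hP.2.1 v
      exact ⟨.inl w, _, ⟨_, _, hw, hQ.of_succ, rfl⟩,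
        by simp [Set.image_insert_eq, Set.insert_union]⟩
    · obtain ⟨w, hw⟩ := hQ.2.1 v
      exact ⟨.inr w, _, ⟨_, _, hP.of_succ, hw, rfl⟩, by simp [Set.image_insert_eq]⟩
  · rintro k _ ⟨P, Q, hP, hQ, rfl⟩ (w | w)
    · obtain ⟨v, hv⟩ := hP.2.2 w
      exact ⟨.inl v, _, ⟨_, _, hv, hQ.of_succ, rfl⟩,
        by simp [Set.image_insert_eq, Set.insert_union]⟩
    · obtain ⟨v, hv⟩ := hQ.2.2 w
      exact ⟨.inr v, _, ⟨_, _, hP.of_succ, hv, rfl⟩, by simp [Set.image_insert_eq]⟩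

/-- The position of the game on box products whose projections are the positions `P` and `Q`. -/
def boxPosition (P : Set (V × W)) (Q : Set (V' × W')) : Set ((V × V') × (W × W')) :=
  {z | (z.1.1, z.2.1) ∈ P ∧ (z.1.2, z.2.2) ∈ Q}

theorem insert_boxPosition_subset (v : V) (v' : V') (w : W) (w' : W') (P : Set (V × W))
    (Q : Set (V' × W')) : insert ((v, v'), (w, w')) (boxPosition P Q) ⊆
      boxPosition (insert (v, w) P) (insert (v', w') Q) :=
  Set.insert_subset ⟨.inl rfl, .inl rfl⟩ fun _ hz => ⟨.inr hz.1, .inr hz.2⟩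

/-- Each move in the game on the box products is a move in both factors. -/
theorem DuplicatorWins.boxProd {P : Set (V × W)} {Q : Set (V' × W')}
    (hP : DuplicatorWins G H k P) (hQ : DuplicatorWins G' H' k Q) :
    DuplicatorWins (G □ G') (H □ H') k (boxPosition P Q) := by
  refine of_backAndForth (S := fun k => {R | ∃ P Q, DuplicatorWins G H k P ∧
    DuplicatorWins G' H' k Q ∧ boxPosition P Q = R}) ?_ ?_ ?_ ⟨P, Q, hP, hQ, rfl⟩
  · rintro k _ ⟨P, Q, hP, hQ, rfl⟩ x ⟨hxP, hxQ⟩ y ⟨hyP, hyQ⟩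
    obtain ⟨eqP, adjP⟩ := hP.isPartialIso _ hxP _ hyP
    obtain ⟨eqQ, adjQ⟩ := hQ.isPartialIso _ hxQ _ hyQ
    simp only [Prod.ext_iff, SimpleGraph.boxProd_adj, eqP, eqQ, adjP, adjQ, and_self]
  · rintro k _ ⟨P, Q, hP, hQ, rfl⟩ ⟨v, v'⟩
    obtain ⟨w, hw⟩ := hP.2.1 v
    obtain ⟨w', hw'⟩ := hQ.2.1 v'
    exact ⟨(w, w'), _, ⟨_, _, hw, hw', rfl⟩, insert_boxPosition_subset ..⟩
  · rintro k _ ⟨P, Q, hP, hQ, rfl⟩ ⟨w, w'⟩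
    obtain ⟨v, hv⟩ := hP.2.2 w
    obtain ⟨v', hv'⟩ := hQ.2.2 w'
    exact ⟨(v, v'), _, ⟨_, _, hv, hv', rfl⟩, insert_boxPosition_subset ..⟩

theorem exists_isPartialIso_bot_insert {P : Set (V × W)}
    (hP : IsPartialIso (⊥ : SimpleGraph V) (⊥ : SimpleGraph W) P)
    (hne : (Prod.snd '' P)ᶜ.Nonempty) (v : V) :
    ∃ w, IsPartialIso (⊥ : SimpleGraph V) (⊥ : SimpleGraph W) (insert (v, w) P) := by
  by_cases hv : ∃ w, (v, w) ∈ P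
  · obtain ⟨w, hw⟩ := hv
    exact ⟨w, by rwa [Set.insert_eq_of_mem hw]⟩
  · obtain ⟨w, hw⟩ := hne
    refine ⟨w, fun x hx y hy => ?_⟩
    have hxy := fun hx hy => (hP x hx y hy).1
    grind [SimpleGraph.bot_adj]

theorem nonempty_of_succ_le_encard {s : Set V} (h : (k + 1 : ℕ) ≤ s.encard) : s.Nonempty :=
  Set.encard_pos.1 (lt_of_lt_of_le (by simp) h)

theorem le_encard_compl_insert {s : Set V} (h : (k + 1 : ℕ) ≤ sᶜ.encard) (v : V) :
    k ≤ (insert v s)ᶜ.encard := by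
  have hinsert : (insert v s)ᶜ = sᶜ \ {v} := by grind
  rw [hinsert, ← ENat.add_le_add_iff_right ENat.one_ne_top, ← Nat.cast_add_one]
  simpa only [Set.encard_singleton] using h.trans (Set.encard_le_encard_sdiff_add_encard sᶜ {v})

/-- On edgeless graphs Duplicator only has to answer a new vertex by a new vertex. -/
theorem DuplicatorWins.bot {P : Set (V × W)}
    (hP : IsPartialIso (⊥ : SimpleGraph V) (⊥ : SimpleGraph W) P)
    (hV : k ≤ (Prod.fst '' P)ᶜ.encard) (hW : k ≤ (Prod.snd '' P)ᶜ.encard) :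
    DuplicatorWins (⊥ : SimpleGraph V) (⊥ : SimpleGraph W) k P := by
  refine of_backAndForth (S := fun k => {P | IsPartialIso ⊥ ⊥ P ∧ k ≤ (Prod.fst '' P)ᶜ.encard ∧
    k ≤ (Prod.snd '' P)ᶜ.encard}) (fun k P hP => hP.1) ?_ ?_ ⟨hP, hV, hW⟩
  · rintro k P ⟨hP, hV, hW⟩ v
    obtain ⟨w, hw⟩ := exists_isPartialIso_bot_insert hP (nonempty_of_succ_le_encard hW) v
    refine ⟨w, _, ⟨hw, ?_, ?_⟩, subset_rfl⟩ <;> rw [Set.image_insert_eq]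
    exacts [le_encard_compl_insert hV v, le_encard_compl_insert hW w]
  · rintro k P ⟨hP, hV, hW⟩ w
    obtain ⟨v, hv⟩ := exists_isPartialIso_bot_insert hP.symm
      (by simpa only [← Set.image_swap_eq_preimage_swap, Set.image_image, Prod.snd_swap] using
        nonempty_of_succ_le_encard hV) w
    refine ⟨v, _, ⟨hv.symm.mono (P := insert (v, w) P) (by grind), ?_, ?_⟩, subset_rfl⟩ <;>
      rw [Set.image_insert_eq]
    exacts [le_encard_compl_insert hV v, le_encard_compl_insert hW w]

end Game

/-! ### The monoid of rank-`k` theories -/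


section Theory

universe u

variable {V W : Type u} {G : SimpleGraph V} {H : SimpleGraph W} {k : ℕ}

/-- Indistinguishability of graphs by the `k`-round Ehrenfeucht–Fraïssé game. -/
def gameSetoid (k : ℕ) : Setoid (Σ V : Type u, SimpleGraph V) where
  r G H := DuplicatorWins G.2 H.2 k ∅
  iseqv :=
    { refl _ := (DuplicatorWins.of_iso .refl k).mono (Set.empty_subset _)
      symm h := h.symm.mono (Set.empty_subset _)
      trans h h' := (h.trans h').mono (Set.empty_subset _) }

/-- The rank-`k` theories of graphs, as classes of graphs indistinguishable by the `k`-round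
Ehrenfeucht–Fraïssé game. -/
def RankTheory (k : ℕ) : Type (u + 1) := Quotient (gameSetoid.{u} k)

/-- The rank-`k` theory of a graph. -/
def rankTheory (k : ℕ) (G : SimpleGraph V) : RankTheory.{u} k :=
  Quotient.mk (gameSetoid k) ⟨V, G⟩

theorem rankTheory_eq_iff : rankTheory k G = rankTheory k H ↔ DuplicatorWins G H k ∅ :=
  Quotient.eq (r := gameSetoid k)

theorem rankTheory_eq_of_iso (f : G ≃g H) (k : ℕ) : rankTheory k G = rankTheory k H :=
  rankTheory_eq_iff.2 ((DuplicatorWins.of_iso f k).mono (Set.empty_subset _))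

/-- Multiplication of theories is disjoint union of graphs, so that `a ∣ b` if a graph of theory `b`
has a union of components of theory `a`. -/
instance : CommMonoid (RankTheory.{u} k) where
  one := rankTheory k (⊥ : SimpleGraph PEmpty)
  mul := Quotient.map₂ (fun G H => ⟨G.1 ⊕ H.1, G.2 ⊕g H.2⟩)
    fun _ _ hG _ _ hH => (hG.sum hH).mono (Set.empty_subset _)
  mul_assoc := by
    rintro ⟨_, G⟩ ⟨_, H⟩ ⟨_, K⟩
    exact rankTheory_eq_of_iso SimpleGraph.Iso.sumAssoc k
  mul_comm := by
    rintro ⟨_, G⟩ ⟨_, H⟩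
    exact rankTheory_eq_of_iso SimpleGraph.Iso.sumComm k
  one_mul := by
    rintro ⟨V, G⟩
    exact rankTheory_eq_of_iso ⟨Equiv.emptySum PEmpty V, by simp⟩ k
  mul_one := by
    rintro ⟨V, G⟩
    exact rankTheory_eq_of_iso ⟨Equiv.sumEmpty V PEmpty, by simp⟩ k

theorem rankTheory_sum (k : ℕ) (G : SimpleGraph V) (H : SimpleGraph W) :
    rankTheory k (G ⊕g H) = rankTheory k G * rankTheory k H :=
  rfl

theorem rankTheory_dvd_of_embedding (f : G ↪g H)
    (hclosed : ∀ v w, H.Adj (f v) w → w ∈ Set.range f) (k : ℕ) :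
    rankTheory k G ∣ rankTheory k H := by
  classical
  let split : G ⊕g H.induce (Set.range f)ᶜ ≃g H :=
    { toEquiv := (Equiv.sumCongr (Equiv.ofInjective f f.injective) (.refl _)).trans
        (Equiv.Set.sumCompl (Set.range f))
      map_rel_iff' := by
        rintro (v | ⟨w, hw⟩) (v' | ⟨w', hw'⟩)
        · simp
        · simpa using fun h => hw' (hclosed v w' h)
        · simpa using fun h => hw (hclosed v' w h.symm)
        · simp }
  exact ⟨_, (rankTheory_eq_of_iso split k).symm.trans (rankTheory_sum k _ _)⟩

theorem rankTheory_eq_one [IsEmpty V] (k : ℕ) (G : SimpleGraph V) : rankTheory k G = 1 :=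
  rankTheory_eq_of_iso (H := (⊥ : SimpleGraph PEmpty)) ⟨Equiv.equivOfIsEmpty V PEmpty, by simp⟩ k

theorem rankTheory_bot_boxProd (k s : ℕ) (G : SimpleGraph V) :
    rankTheory k ((⊥ : SimpleGraph (Fin s)) □ G) = rankTheory k G ^ s := by
  induction s with
  | zero => exact rankTheory_eq_one k _
  | succ s ih =>
    let splitLast :
        ((⊥ : SimpleGraph (Fin (s + 1))).boxProd G) ≃g ((⊥ : SimpleGraph (Fin s)).boxProd G) ⊕g G :=
      { toEquiv := ((finSumFinEquiv.symm.prodCongr (.refl V)).trans (.sumProdDistrib ..)).trans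
          (.sumCongr (.refl _) (.uniqueProd V (Fin 1)))
        map_rel_iff' := by
          rintro ⟨i, v⟩ ⟨j, w⟩
          induction i using Fin.addCases <;> induction j using Fin.addCases <;>
            simp [Fin.ext_iff] <;> omega }
    rw [rankTheory_eq_of_iso splitLast, rankTheory_sum, ih, pow_succ]

/-- `s` disjoint copies of `G` form the box product of `G` with the edgeless graph on `s` vertices,
and `k` rounds do not tell `k` isolated vertices from `k + 1`. -/
theorem RankTheory.pow_succ_eq_pow (a : RankTheory.{u} k) : a ^ (k + 1) = a ^ k := by
  obtain ⟨V, G⟩ := a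
  change rankTheory k G ^ (k + 1) = rankTheory k G ^ k
  have hbot : DuplicatorWins (⊥ : SimpleGraph (Fin (k + 1))) (⊥ : SimpleGraph (Fin k)) k ∅ :=
    .bot (by simp [IsPartialIso]) (by simp) (by simp)
  rw [← rankTheory_bot_boxProd, ← rankTheory_bot_boxProd, rankTheory_eq_iff]
  exact (hbot.boxProd (.of_iso (.refl (G := G)) k)).mono (Set.empty_subset _)

theorem dvd_antisymm_of_pow_succ_eq_pow {M : Type*} [CommMonoid M]
    (hpow : ∀ a : M, a ^ (k + 1) = a ^ k) {a b : M} (hab : a ∣ b) (hba : b ∣ a) : a = b := by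
  obtain ⟨c, rfl⟩ := hab
  obtain ⟨d, hd⟩ := hba
  have absorb (n : ℕ) : a = a * (c ^ n * d ^ n) := by
    induction n with
    | zero => simp
    | succ n ih =>
      calc
        a = a * (c ^ n * d ^ n) * c * d := by rwa [← ih]
        _ = a * (c ^ (n + 1) * d ^ (n + 1)) := by rw [pow_succ, pow_succ]; ac_rfl
  calc
    a = a * (c ^ (k + 1) * d ^ k) := by rw [hpow, ← absorb]
    _ = a * (c ^ k * d ^ k) * c := by rw [pow_succ]; ac_rfl
    _ = a * c := by rw [← absorb k]

theorem RankTheory.dvd_antisymm {a b : RankTheory.{u} k} (hab : a ∣ b) (hba : b ∣ a) : a = b :=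
  dvd_antisymm_of_pow_succ_eq_pow RankTheory.pow_succ_eq_pow hab hba

end Theory

section Finiteness

/-- The rank-`k` types of `l`-tuples of vertices: the equalities and adjacencies in the tuple,
together with the rank-`(k - 1)` types of its one-vertex extensions. -/
def RankType : ℕ → ℕ → Type
  | 0, l => Fin l → Fin l → Prop × Prop
  | k + 1, l => (Fin l → Fin l → Prop × Prop) × Set (RankType k (l + 1))

instance RankType.finite : ∀ k l, Finite (RankType k l)
  | 0, l => inferInstanceAs (Finite (Fin l → Fin l → Prop × Prop))
  | k + 1, l =>
    have := RankType.finite k (l + 1)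
    inferInstanceAs (Finite ((Fin l → Fin l → Prop × Prop) × Set (RankType k (l + 1))))

variable {V W : Type*} {G : SimpleGraph V} {H : SimpleGraph W} {k l : ℕ}

/-- The rank-`k` type of the tuple `a` in `G`. -/
def rankType (G : SimpleGraph V) : (k : ℕ) → {l : ℕ} → (Fin l → V) → RankType k l
  | 0, _, a => fun i j => (a i = a j, G.Adj (a i) (a j))
  | k + 1, _, a => (fun i j => (a i = a j, G.Adj (a i) (a j)),
      Set.range fun v => rankType G k (Fin.snoc a v : Fin (_ + 1) → V))

theorem range_snoc_pair (a : Fin l → V) (b : Fin l → W) (v : V) (w : W) :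
    (Set.range fun i => ((Fin.snoc a v : Fin (l + 1) → V) i, (Fin.snoc b w : Fin (l + 1) → W) i)) =
      insert (v, w) (Set.range fun i => (a i, b i)) := by
  ext x
  simp [Fin.exists_fin_succ', or_comm, eq_comm]

theorem isPartialIso_range {a : Fin l → V} {b : Fin l → W}
    (h : (fun i j => (a i = a j, G.Adj (a i) (a j))) =
      fun i j => (b i = b j, H.Adj (b i) (b j))) :
    IsPartialIso G H (Set.range fun i => (a i, b i)) := by
  rintro _ ⟨i, rfl⟩ _ ⟨j, rfl⟩
  simpa using congr_fun₂ h i j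

theorem duplicatorWins_of_rankType_eq {a : Fin l → V} {b : Fin l → W}
    (h : rankType G k a = rankType H k b) :
    DuplicatorWins G H k (Set.range fun i => (a i, b i)) := by
  induction k generalizing l with
  | zero => exact isPartialIso_range h
  | succ k ih =>
    obtain ⟨hatomic, hext⟩ := Prod.ext_iff.1 h
    refine ⟨isPartialIso_range hatomic, fun v => ?_, fun w => ?_⟩
    · obtain ⟨w, hw⟩ := hext.subset ⟨v, rfl⟩
      exact ⟨w, range_snoc_pair a b v w ▸ ih hw.symm⟩
    · obtain ⟨v, hv⟩ := hext.superset ⟨w, rfl⟩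
      exact ⟨v, range_snoc_pair a b v w ▸ ih hv⟩

instance : Finite (RankTheory k) :=
  Finite.of_injective (fun t => rankType (Quotient.out t).2 k ![]) fun t t' h => by
    refine Quotient.out_equiv_out.1 ((duplicatorWins_of_rankType_eq h).mono (Set.empty_subset _))

end Finiteness

section Formula

variable {V W α : Type*} {G : SimpleGraph V} {H : SimpleGraph W} {P : Set (V × W)} {k l : ℕ}

/-- The quantifier rank of a formula: the nesting depth of its quantifiers. -/
def quantifierRank {L : Language} {l : ℕ} : L.BoundedFormula α l → ℕ
  | .falsum => 0
  | .equal _ _ => 0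
  | .rel _ _ => 0
  | .imp φ χ => max (quantifierRank φ) (quantifierRank χ)
  | .all φ => quantifierRank φ + 1

theorem realize_term_mem {v : α → V} {w : α → W} (hvw : ∀ i, (v i, w i) ∈ P)
    (t : Language.graph.Term α) :
    (@Language.Term.realize _ _ G.structure _ v t, @Language.Term.realize _ _ H.structure _ w t)
      ∈ P := by
  cases t with
  | var i => exact hvw i
  | func f _ => exact isEmptyElim f

theorem snoc_mem_insert {a : Fin l → V} {b : Fin l → W} (hab : ∀ i, (a i, b i) ∈ P) (v : V) (w : W)
    (i : Fin (l + 1)) : ((Fin.snoc a v : Fin (l + 1) → V) i, (Fin.snoc b w : Fin (l + 1) → W) i) ∈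
      insert (v, w) P := by
  have := Set.insert_subset_insert (a := (v, w)) (Set.range_subset_iff.2 hab)
  exact this (range_snoc_pair a b v w ▸ Set.mem_range_self i)

theorem DuplicatorWins.realize_iff {φ : Language.graph.BoundedFormula α l}
    (hP : DuplicatorWins G H k P) (hk : quantifierRank φ ≤ k) {v : α → V} {w : α → W}
    (hvw : ∀ i, (v i, w i) ∈ P) {a : Fin l → V} {b : Fin l → W} (hab : ∀ i, (a i, b i) ∈ P) :
    @Language.BoundedFormula.Realize _ _ G.structure _ _ φ v a ↔
      @Language.BoundedFormula.Realize _ _ H.structure _ _ φ w b := by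
  induction φ generalizing k P with
  | falsum => exact Iff.rfl
  | equal t u =>
    exact (hP.isPartialIso _ (realize_term_mem (Sum.rec hvw hab) t) _
      (realize_term_mem (Sum.rec hvw hab) u)).1
  | rel R ts =>
    cases R
    exact (hP.isPartialIso _ (realize_term_mem (Sum.rec hvw hab) (ts 0)) _
      (realize_term_mem (Sum.rec hvw hab) (ts 1))).2
  | imp φ χ ihφ ihχ =>
    obtain ⟨hφ, hχ⟩ := max_le_iff.1 hk
    exact imp_congr (ihφ hP hφ hvw hab) (ihχ hP hχ hvw hab)
  | all φ ih =>
    obtain _ | k := k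
    · exact absurd hk (Nat.not_succ_le_zero _)
    have step {x : V} {y : W} (h : DuplicatorWins G H k (insert (x, y) P)) :=
      ih h (Nat.le_of_succ_le_succ hk) (fun i => .inr (hvw i)) (snoc_mem_insert hab x y)
    constructor
    · intro hG y
      obtain ⟨x, hx⟩ := hP.2.2 y
      exact (step hx).1 (hG x)
    · intro hH x
      obtain ⟨y, hy⟩ := hP.2.1 x
      exact (step hy).2 (hH y)

/-- The outcome `ω` of the random graph, as a graph. -/
def sampleGraph {n : ℕ} (ω : Sample n) : SimpleGraph (Fin n) where
  Adj := sampleAdj ω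
  symm := ⟨fun _ _ ⟨e, he, h⟩ => ⟨e, he, h.symm⟩⟩
  loopless := ⟨fun v ⟨e, _, h⟩ => by have := e.2; grind⟩

theorem satL_iff_of_rankTheory_eq {n m : ℕ} {ω : Sample n} {ω' : Sample m}
    {ψ : Language.graph.Sentence} (h : rankTheory (quantifierRank ψ) (sampleGraph ω) =
      rankTheory (quantifierRank ψ) (sampleGraph ω')) : SatL ω ψ ↔ SatL ω' ψ :=
  (rankTheory_eq_iff.1 h).realize_iff le_rfl (fun i => i.elim) (fun i => i.elim0)

end Formula

/-! ### The second moment method -/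

section SecondMoment

open MeasureTheory ProbabilityTheory

variable {Ω ι E : Type*} [MeasurableSpace Ω] {μ : Measure Ω}

theorem covariance_indicator_one [IsProbabilityMeasure μ] {A B : Set Ω} (hA : MeasurableSet A)
    (hB : MeasurableSet B) :
    cov[A.indicator 1, B.indicator 1; μ] = μ.real (A ∩ B) - μ.real A * μ.real B := by
  have memLp {C : Set Ω} (hC : MeasurableSet C) : MemLp (C.indicator (1 : Ω → ℝ)) 2 μ :=
    (memLp_const 1).indicator hC
  rw [covariance_eq_sub (memLp hA) (memLp hB),
    ← Set.inter_indicator_one, integral_indicator_one (hA.inter hB), integral_indicator_one hA,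
    integral_indicator_one hB]

/-- Chebyshev's inequality for the number of events that occur. -/
theorem measureReal_forall_notMem_le [IsProbabilityMeasure μ] {A : ι → Set Ω}
    (hA : ∀ i, MeasurableSet (A i)) {J : Finset ι} (hpos : 0 < ∑ i ∈ J, μ.real (A i)) :
    μ.real {ω | ∀ i ∈ J, ω ∉ A i} ≤
      (∑ i ∈ J, ∑ j ∈ J, (μ.real (A i ∩ A j) - μ.real (A i) * μ.real (A j))) /
        (∑ i ∈ J, μ.real (A i)) ^ 2 := by
  set count : Ω → ℝ := ∑ i ∈ J, (A i).indicator 1 with hcount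
  have memLp (i : ι) : MemLp ((A i).indicator (1 : Ω → ℝ)) 2 μ :=
    (memLp_const 1).indicator (hA i)
  have mean : μ[count] = ∑ i ∈ J, μ.real (A i) := by
    simp_rw [hcount, Finset.sum_apply]
    rw [integral_finsetSum _ fun i _ => (memLp i).integrable one_le_two]
    exact Finset.sum_congr rfl fun i _ => integral_indicator_one (hA i)
  have var : Var[count; μ] =
      ∑ i ∈ J, ∑ j ∈ J, (μ.real (A i ∩ A j) - μ.real (A i) * μ.real (A j)) := by
    rw [hcount, variance_sum' fun i _ => memLp i]
    simp_rw [covariance_indicator_one (hA _) (hA _)]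
  have subset : {ω | ∀ i ∈ J, ω ∉ A i} ⊆ {ω | μ[count] ≤ |count ω - μ[count]|} := by
    intro ω hω
    have hzero : count ω = 0 := by
      rw [hcount, Finset.sum_apply]
      exact Finset.sum_eq_zero fun i hi => Set.indicator_of_notMem (hω i hi) 1
    simp [hzero, le_abs_self]
  calc
    μ.real {ω | ∀ i ∈ J, ω ∉ A i} ≤ μ.real {ω | μ[count] ≤ |count ω - μ[count]|} :=
      measureReal_mono subset
    _ ≤ Var[count; μ] / μ[count] ^ 2 :=
      ENNReal.toReal_le_of_le_ofReal (div_nonneg (variance_nonneg _ _) (sq_nonneg _))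
        (meas_ge_le_variance_div_sq (memLp_finsetSum' J fun i _ => memLp i) (mean ▸ hpos))
    _ = _ := by rw [var, mean]

theorem one_sub_prod_le_sum_one_sub {s : Finset E} {q : E → ℝ}
    (hq : ∀ e ∈ s, q e ∈ Set.Icc 0 1) : 1 - ∏ e ∈ s, q e ≤ ∑ e ∈ s, (1 - q e) := by
  induction s using Finset.cons_induction with
  | empty => simp
  | cons e s he ih =>
    obtain ⟨hqe, hqs⟩ := (Finset.forall_mem_cons he _).1 hq
    have hprod : ∏ e ∈ s, q e ≤ 1 :=
      Finset.prod_le_one (fun e he => (hqs e he).1) fun e he => (hqs e he).2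
    rw [Finset.prod_cons, Finset.sum_cons]
    nlinarith [ih hqs, hqe.1, hqe.2]

theorem measureReal_biInter_of_iIndepSet {B : E → Set Ω} (hB : iIndepSet B μ) (S : Finset E) :
    μ.real (⋂ e ∈ S, B e) = ∏ e ∈ S, μ.real (B e) := by
  simp only [measureReal_def, hB.meas_biInter S, ENNReal.toReal_prod]

variable [DecidableEq E] {B : E → Set Ω}

theorem measureReal_biInter_inter_sub_le (hB : iIndepSet B μ) (S T : Finset E) :
    μ.real ((⋂ e ∈ S, B e) ∩ ⋂ e ∈ T, B e) -
        μ.real (⋂ e ∈ S, B e) * μ.real (⋂ e ∈ T, B e) ≤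
      μ.real (⋂ e ∈ S, B e) * ∑ e ∈ S ∩ T, (1 - μ.real (B e)) := by
  have := hB.isProbabilityMeasure
  have hunion : μ.real ((⋂ e ∈ S, B e) ∩ ⋂ e ∈ T, B e) =
      μ.real (⋂ e ∈ S, B e) * ∏ e ∈ T \ S, μ.real (B e) := by
    rw [← Finset.set_biInter_inter, measureReal_biInter_of_iIndepSet hB,
      measureReal_biInter_of_iIndepSet hB, ← Finset.union_sdiff_self_eq_union,
      Finset.prod_union Finset.disjoint_sdiff]
  have hsplit : μ.real (⋂ e ∈ T, B e) =
      (∏ e ∈ S ∩ T, μ.real (B e)) * ∏ e ∈ T \ S, μ.real (B e) := by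
    rw [measureReal_biInter_of_iIndepSet hB, Finset.inter_comm, Finset.prod_inter_mul_prod_sdiff]
  have hdiff : ∏ e ∈ T \ S, μ.real (B e) ≤ 1 :=
    Finset.prod_le_one (fun _ _ => measureReal_nonneg) fun _ _ => measureReal_le_one
  have hinter : 0 ≤ 1 - ∏ e ∈ S ∩ T, μ.real (B e) := sub_nonneg.2 <|
    Finset.prod_le_one (fun _ _ => measureReal_nonneg) fun _ _ => measureReal_le_one
  rw [hunion, hsplit, ← mul_sub, ← one_sub_mul]
  gcongr
  exact (mul_le_of_le_one_right hinter hdiff).trans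
    (one_sub_prod_le_sum_one_sub fun _ _ => ⟨measureReal_nonneg, measureReal_le_one⟩)

theorem measureReal_forall_notMem_biInter_le [DecidableEq ι] (hindep : iIndepSet B μ)
    (hB : ∀ e, MeasurableSet (B e)) {S : ι → Finset E} {J : Finset ι} {D : ℝ}
    (hD : ∀ i ∈ J, ∑ j ∈ J.erase i, ∑ e ∈ S i ∩ S j, (1 - μ.real (B e)) ≤ D)
    (hpos : 0 < ∑ i ∈ J, μ.real (⋂ e ∈ S i, B e)) :
    μ.real {ω | ∀ i ∈ J, ω ∉ ⋂ e ∈ S i, B e} ≤ (1 + D) / ∑ i ∈ J, μ.real (⋂ e ∈ S i, B e) := by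
  have := hindep.isProbabilityMeasure
  set A : ι → Set Ω := fun i => ⋂ e ∈ S i, B e
  have hrow : ∀ i ∈ J, ∑ j ∈ J, (μ.real (A i ∩ A j) - μ.real (A i) * μ.real (A j)) ≤
      μ.real (A i) * (1 + D) := by
    intro i hi
    have hdiag : μ.real (A i ∩ A i) - μ.real (A i) * μ.real (A i) ≤ μ.real (A i) := by
      rw [Set.inter_self]
      exact sub_le_self _ (mul_self_nonneg _)
    calc
      _ ≤ μ.real (A i) + ∑ j ∈ J.erase i, μ.real (A i) * ∑ e ∈ S i ∩ S j, (1 - μ.real (B e)) := by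
        rw [← Finset.add_sum_erase J _ hi]
        exact add_le_add hdiag
          (Finset.sum_le_sum fun j _ => measureReal_biInter_inter_sub_le hindep _ _)
      _ ≤ μ.real (A i) * (1 + D) := by
        rw [← Finset.mul_sum, ← mul_one_add]
        gcongr
        exact hD i hi
  calc
    _ ≤ (∑ i ∈ J, ∑ j ∈ J, (μ.real (A i ∩ A j) - μ.real (A i) * μ.real (A j))) /
        (∑ i ∈ J, μ.real (A i)) ^ 2 :=
      measureReal_forall_notMem_le (fun i => (S i).measurableSet_biInter fun e _ => hB e) hpos
    _ ≤ ((∑ i ∈ J, μ.real (A i)) * (1 + D)) / (∑ i ∈ J, μ.real (A i)) ^ 2 := by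
      rw [Finset.sum_mul]
      gcongr with i hi
      exact hrow i hi
    _ = (1 + D) / ∑ i ∈ J, μ.real (A i) := by field_simp

end SecondMoment

/-! ### Isolated copies of a fixed graph -/

section GraphMeasure

open MeasureTheory ProbabilityTheory

variable {n : ℕ} {p : ℕ → unitInterval}

/-- The distance between the endpoints of a potential edge. -/
def edgeLength (e : EdgeIdx n) : ℕ := e.1.2.val - e.1.1.val

/-- The distribution of the random graph `G(n, p̄)`, as a product of Bernoulli measures. -/
noncomputable def graphMeasure (p : ℕ → unitInterval) (n : ℕ) : Measure (Sample n) :=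
  Measure.pi fun e => bernoulliMeasure true false (p (edgeLength e))

instance : IsProbabilityMeasure (graphMeasure p n) :=
  inferInstanceAs (IsProbabilityMeasure (Measure.pi _))

theorem bernoulliMeasure_true_false_real_singleton (q : unitInterval) (b : Bool) :
    (bernoulliMeasure true false q).real {b} = if b then (q : ℝ) else 1 - q := by
  cases b <;> simp

theorem measurePreserving_eval_graphMeasure (p : ℕ → unitInterval) (e : EdgeIdx n) :
    MeasurePreserving (Function.eval e) (graphMeasure p n)
      (bernoulliMeasure true false (p (edgeLength e))) :=
  measurePreserving_eval _ e

theorem graphMeasure_real_eval_eq (p : ℕ → unitInterval) (e : EdgeIdx n) (b : Bool) :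
    (graphMeasure p n).real {ω | ω e = b} =
      if b then (p (edgeLength e) : ℝ) else 1 - p (edgeLength e) := by
  rw [← bernoulliMeasure_true_false_real_singleton,
    ← (measurePreserving_eval_graphMeasure p e).measureReal_preimage
      (measurableSet_singleton b).nullMeasurableSet]
  rfl

theorem iIndepSet_graphMeasure (p : ℕ → unitInterval) (ω₀ : Sample n) :
    iIndepSet (fun e => {ω | ω e = ω₀ e}) (graphMeasure p n) := by
  have hindep : iIndepFun (fun e (ω : Sample n) => ω e) (graphMeasure p n) :=
    iIndepFun_pi (X := fun _ => id) fun _ => aemeasurable_id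
  rw [iIndepSet_iff_meas_biInter fun e => .of_discrete]
  exact fun S => hindep.measure_inter_preimage_eq_mul S (sets := fun e => {ω₀ e})
    fun _ _ => .of_discrete

theorem graphMeasure_real_singleton (p : ℕ → unitInterval) (ω : Sample n) :
    (graphMeasure p n).real {ω} = sampleWeight (fun i => p i) ω := by
  have hsingleton : {ω} = ⋂ e ∈ (Finset.univ : Finset (EdgeIdx n)), {ω' | ω' e = ω e} := by
    ext ω'
    simp [funext_iff]
  rw [hsingleton, measureReal_biInter_of_iIndepSet (iIndepSet_graphMeasure p ω)]
  exact Finset.prod_congr rfl fun e _ => graphMeasure_real_eval_eq p e (ω e)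

theorem Pr_eq_graphMeasure_real (p : ℕ → unitInterval) (P : Sample n → Prop) :
    Pr (fun i => p i) n P = (graphMeasure p n).real {ω | P ω} := by
  classical
  simp only [Pr, ← graphMeasure_real_singleton]
  rw [← Finset.sum_filter, sum_measureReal_singleton]
  simp

end GraphMeasure

section Translates

variable {n m : ℕ}

/-- The `j`-th copy of `Fin n` in the division of `Fin m` into intervals of length `n`. -/
def translate (j : Fin (m / n)) (v : Fin n) : Fin m :=
  (finProdFinEquiv (j, v)).castLE (Nat.div_mul_le_self m n)

theorem translate_inj {j j' : Fin (m / n)} {v v' : Fin n} :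
    translate j v = translate j' v' ↔ j = j' ∧ v = v' := by
  simp [translate]

theorem translate_lt_translate {j : Fin (m / n)} {v w : Fin n} :
    translate j v < translate j w ↔ v < w := by
  simp [translate, ← Fin.val_fin_lt]

/-- The translate of an edge to the `j`-th interval of length `n`. -/
def translateEdge (j : Fin (m / n)) (f : EdgeIdx n) : EdgeIdx m :=
  ⟨(translate j f.1.1, translate j f.1.2), translate_lt_translate.2 f.2⟩

theorem translateEdge_inj {j j' : Fin (m / n)} {f f' : EdgeIdx n} :
    translateEdge j f = translateEdge j' f' ↔ j = j' ∧ f = f' := by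
  simp only [translateEdge, Subtype.ext_iff, Prod.ext_iff, translate_inj]
  tauto

theorem edgeLength_translateEdge (j : Fin (m / n)) (f : EdgeIdx n) :
    edgeLength (translateEdge j f) = edgeLength f := by
  simp [edgeLength, translateEdge, translate, Nat.add_sub_add_right]

open scoped Classical in
/-- The outcome on `Fin m` whose edges are those of the copies of `ω₀` on the translates of
`Fin n`. -/
noncomputable def translatePattern (ω₀ : Sample n) (m : ℕ) : Sample m :=
  fun e => decide (∃ (j : Fin (m / n)) (f : EdgeIdx n), ω₀ f = true ∧ translateEdge j f = e)

theorem translatePattern_translateEdge (ω₀ : Sample n) (j : Fin (m / n)) (f : EdgeIdx n) :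
    translatePattern ω₀ m (translateEdge j f) = ω₀ f := by
  rw [Bool.eq_iff_iff, translatePattern, decide_eq_true_iff]
  simp [translateEdge_inj]

/-- The potential edges that have an endpoint in the `j`-th interval of length `n`. -/
def edgesMeeting (j : Fin (m / n)) : Finset (EdgeIdx m) :=
  {e | (∃ v, translate j v = e.1.1) ∨ ∃ v, translate j v = e.1.2}

theorem mem_edgesMeeting {j : Fin (m / n)} {e : EdgeIdx m} :
    e ∈ edgesMeeting j ↔ (∃ v, translate j v = e.1.1) ∨ ∃ v, translate j v = e.1.2 := by
  simp [edgesMeeting]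

theorem translateEdge_mem_edgesMeeting (j : Fin (m / n)) (f : EdgeIdx n) :
    translateEdge j f ∈ edgesMeeting j :=
  mem_edgesMeeting.2 (.inl ⟨f.1.1, rfl⟩)

theorem translateEdge_notMem_edgesMeeting {i j : Fin (m / n)} (hij : i ≠ j) (f : EdgeIdx n) :
    translateEdge i f ∉ edgesMeeting j := by
  simp [mem_edgesMeeting, translateEdge, translate_inj, hij.symm]

theorem exists_translateEdge_eq {ω₀ : Sample n} {j : Fin (m / n)} {e : EdgeIdx m}
    (he : e ∈ edgesMeeting j) (hpattern : translatePattern ω₀ m e = true) :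
    ∃ f, ω₀ f = true ∧ translateEdge j f = e := by
  obtain ⟨i, f, hf, rfl⟩ := decide_eq_true_iff.1 hpattern
  obtain rfl : i = j := by
    by_contra hij
    exact translateEdge_notMem_edgesMeeting hij f he
  exact ⟨f, hf, rfl⟩

theorem translatePattern_eq_false {i j : Fin (m / n)} (hij : i ≠ j) (ω₀ : Sample n) {e : EdgeIdx m}
    (hi : e ∈ edgesMeeting i) (hj : e ∈ edgesMeeting j) : translatePattern ω₀ m e = false := by
  by_contra hpattern
  obtain ⟨f, -, rfl⟩ := exists_translateEdge_eq hi (Bool.eq_true_of_not_eq_false hpattern)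
  exact translateEdge_notMem_edgesMeeting hij f hj

theorem pairwiseDisjoint_inter_edgesMeeting (i : Fin (m / n)) :
    ((Finset.univ.erase i : Finset (Fin (m / n))) : Set (Fin (m / n))).PairwiseDisjoint
      fun j => edgesMeeting i ∩ edgesMeeting j := by
  intro j hj j' hj' hjj'
  rw [Function.onFun, Finset.disjoint_left]
  simp only [Finset.coe_erase, Finset.coe_univ, Set.mem_sdiff, Set.mem_univ, true_and,
    Set.mem_singleton_iff] at hj hj'
  simp only [Finset.mem_inter, mem_edgesMeeting]
  grind [translate_inj]

theorem sampleGraph_adj {ω : Sample n} {v w : Fin n} :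
    (sampleGraph ω).Adj v w ↔ ∃ e : EdgeIdx n, ω e = true ∧ (e.1 = (v, w) ∨ e.1 = (w, v)) := by
  simp [sampleGraph, sampleAdj, adjVal, Prod.ext_iff, Fin.ext_iff]

theorem exists_of_sampleGraph_adj_translate {ω₀ : Sample n} {ω : Sample m} {j : Fin (m / n)}
    (hω : ∀ e ∈ edgesMeeting j, ω e = translatePattern ω₀ m e) {v : Fin n} {x : Fin m}
    (hadj : (sampleGraph ω).Adj (translate j v) x) :
    ∃ w, translate j w = x ∧ (sampleGraph ω₀).Adj v w := by
  obtain ⟨e, he, hends⟩ := sampleGraph_adj.1 hadj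
  have hmeet : e ∈ edgesMeeting j :=
    mem_edgesMeeting.2 (hends.imp (fun h => ⟨v, by rw [h]⟩) fun h => ⟨v, by rw [h]⟩)
  obtain ⟨f, hf, rfl⟩ := exists_translateEdge_eq hmeet ((hω e hmeet).symm.trans he)
  simp only [translateEdge, Prod.ext_iff, translate_inj, true_and] at hends
  obtain ⟨rfl, rfl⟩ | ⟨rfl, rfl⟩ := hends
  · exact ⟨_, rfl, sampleGraph_adj.2 ⟨f, hf, .inl rfl⟩⟩
  · exact ⟨_, rfl, sampleGraph_adj.2 ⟨f, hf, .inr rfl⟩⟩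

theorem sampleGraph_adj_translate_iff {ω₀ : Sample n} {ω : Sample m} {j : Fin (m / n)}
    (hω : ∀ e ∈ edgesMeeting j, ω e = translatePattern ω₀ m e) {v w : Fin n} :
    (sampleGraph ω).Adj (translate j v) (translate j w) ↔ (sampleGraph ω₀).Adj v w := by
  refine ⟨fun hadj => ?_, fun hadj => ?_⟩
  · obtain ⟨w', hw', hadj⟩ := exists_of_sampleGraph_adj_translate hω hadj
    rwa [← (translate_inj.1 hw').2]
  · obtain ⟨f, hf, hends⟩ := sampleGraph_adj.1 hadj
    refine sampleGraph_adj.2 ⟨translateEdge j f, ?_, ?_⟩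
    · rw [hω _ (translateEdge_mem_edgesMeeting j f), translatePattern_translateEdge, hf]
    · exact hends.imp (fun h => by simp [translateEdge, h]) fun h => by simp [translateEdge, h]

theorem rankTheory_dvd_of_eq_translatePattern {ω₀ : Sample n} {ω : Sample m} {j : Fin (m / n)}
    (hω : ∀ e ∈ edgesMeeting j, ω e = translatePattern ω₀ m e) (k : ℕ) :
    rankTheory k (sampleGraph ω₀) ∣ rankTheory k (sampleGraph ω) := by
  let copy : sampleGraph ω₀ ↪g sampleGraph ω :=
    { toFun := translate j
      inj' v w h := (translate_inj.1 h).2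
      map_rel_iff' := sampleGraph_adj_translate_iff hω }
  refine rankTheory_dvd_of_embedding copy (fun v x hadj => ?_) k
  obtain ⟨w, rfl, -⟩ := exists_of_sampleGraph_adj_translate hω hadj
  exact ⟨w, rfl⟩

end Translates

section IsolatedCopies

open MeasureTheory ProbabilityTheory

variable {n m : ℕ} {p : ℕ → unitInterval}

theorem edgeLength_mem_Icc (e : EdgeIdx m) : edgeLength e ∈ Finset.Icc 1 m := by
  have := e.2
  grind [edgeLength]

theorem sum_edgeLength_filter_le (s : Finset (Fin m)) {endpoint : EdgeIdx m → Fin m}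
    (hinj : (fun e => (endpoint e, edgeLength e)).Injective) {g : ℕ → ℝ} (hg : ∀ i, 0 ≤ g i) :
    ∑ e with endpoint e ∈ s, g (edgeLength e) ≤ s.card * ∑ i ∈ Finset.Icc 1 m, g i := by
  calc
    _ = ∑ x ∈ ({e | endpoint e ∈ s} : Finset _).image fun e => (endpoint e, edgeLength e), g x.2 :=
      (Finset.sum_image hinj.injOn).symm
    _ ≤ ∑ x ∈ s ×ˢ Finset.Icc 1 m, g x.2 := by
      refine Finset.sum_le_sum_of_subset_of_nonneg (Finset.image_subset_iff.2 fun e he => ?_)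
        fun _ _ _ => hg _
      exact Finset.mem_product.2 ⟨(Finset.mem_filter.1 he).2, edgeLength_mem_Icc e⟩
    _ = s.card * ∑ i ∈ Finset.Icc 1 m, g i := by simp [Finset.sum_product]

theorem sum_edgeLength_edgesMeeting_le (j : Fin (m / n)) {g : ℕ → ℝ} (hg : ∀ i, 0 ≤ g i) :
    ∑ e ∈ edgesMeeting j, g (edgeLength e) ≤ 2 * n * ∑ i ∈ Finset.Icc 1 m, g i := by
  set block : Finset (Fin m) := Finset.univ.image (translate j)
  have hcard : (block.card : ℝ) ≤ n := by
    exact_mod_cast Finset.card_image_le.trans (Finset.card_fin n).le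
  have hmeeting : edgesMeeting j =
      ({e | e.1.1 ∈ block} : Finset (EdgeIdx m)) ∪ ({e | e.1.2 ∈ block} : Finset (EdgeIdx m)) := by
    ext e
    simp [mem_edgesMeeting, block]
  have hfst : (fun e : EdgeIdx m => (e.1.1, edgeLength e)).Injective := by
    rintro ⟨⟨v, w⟩, hvw⟩ ⟨⟨v', w'⟩, hvw'⟩ h
    grind [edgeLength]
  have hsnd : (fun e : EdgeIdx m => (e.1.2, edgeLength e)).Injective := by
    rintro ⟨⟨v, w⟩, hvw⟩ ⟨⟨v', w'⟩, hvw'⟩ h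
    grind [edgeLength]
  have hsum : 0 ≤ ∑ i ∈ Finset.Icc 1 m, g i := Finset.sum_nonneg fun i _ => hg i
  calc
    _ ≤ ∑ e : EdgeIdx m with e.1.1 ∈ block, g (edgeLength e) +
        ∑ e : EdgeIdx m with e.1.2 ∈ block, g (edgeLength e) := by
      rw [hmeeting, ← Finset.sum_union_inter]
      exact le_add_of_nonneg_right (Finset.sum_nonneg fun _ _ => hg _)
    _ ≤ block.card * ∑ i ∈ Finset.Icc 1 m, g i + block.card * ∑ i ∈ Finset.Icc 1 m, g i :=
      add_le_add (sum_edgeLength_filter_le block hfst hg) (sum_edgeLength_filter_le block hsnd hg)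
    _ ≤ 2 * n * ∑ i ∈ Finset.Icc 1 m, g i := by
      rw [← two_mul, ← mul_assoc]
      gcongr

/-- The quantity `-log ∏_{i ≤ m} (1 - p i)`, which measures how unlikely it is that a vertex has
no neighbours at distance at most `m` on one side. -/
noncomputable def nonedgeCost (p : ℕ → unitInterval) (m : ℕ) : ℝ :=
  ∑ i ∈ Finset.Icc 1 m, -Real.log (1 - p i)

theorem neg_log_one_sub_nonneg (q : unitInterval) : 0 ≤ -Real.log (1 - q) :=
  neg_nonneg.2 (Real.log_nonpos (unitInterval.one_minus_nonneg q)
    (unitInterval.one_minus_le_one q))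

theorem sum_le_nonedgeCost (hp : ∀ i, (p i : ℝ) < 1) (m : ℕ) :
    ∑ i ∈ Finset.Icc 1 m, (p i : ℝ) ≤ nonedgeCost p m := by
  refine Finset.sum_le_sum fun i _ => ?_
  linarith [Real.log_le_sub_one_of_pos (sub_pos.2 (hp i))]

theorem exp_neg_nonedgeCost_le_prod (hp : ∀ i, (p i : ℝ) < 1) (j : Fin (m / n)) :
    Real.exp (-(2 * n * nonedgeCost p m)) ≤ ∏ e ∈ edgesMeeting j, (1 - p (edgeLength e) : ℝ) := by
  have hpos (e : EdgeIdx m) : (0 : ℝ) < 1 - p (edgeLength e) := sub_pos.2 (hp _)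
  rw [← Real.exp_log (Finset.prod_pos fun e _ => hpos e), Real.log_prod fun e _ => (hpos e).ne',
    Real.exp_le_exp, neg_le, ← Finset.sum_neg_distrib]
  exact sum_edgeLength_edgesMeeting_le (g := fun i => -Real.log (1 - p i)) j
    fun i => neg_log_one_sub_nonneg (p i)

/-- The outcomes in which the `j`-th interval of length `n` spans an isolated copy of `ω₀`. -/
def isolatedCopyEvent (ω₀ : Sample n) (j : Fin (m / n)) : Set (Sample m) :=
  ⋂ e ∈ edgesMeeting j, {ω | ω e = translatePattern ω₀ m e}

theorem sampleWeight_mul_prod_le (ω₀ : Sample n) (j : Fin (m / n)) :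
    sampleWeight (fun i => p i) ω₀ * ∏ e ∈ edgesMeeting j, (1 - p (edgeLength e) : ℝ) ≤
      (graphMeasure p m).real (isolatedCopyEvent ω₀ j) := by
  set inner : Finset (EdgeIdx m) := Finset.univ.image (translateEdge j) with hinner
  have hsubset : inner ⊆ edgesMeeting j :=
    Finset.image_subset_iff.2 fun f _ => translateEdge_mem_edgesMeeting j f
  have hweight : sampleWeight (fun i => p i) ω₀ =
      ∏ e ∈ inner, (graphMeasure p m).real {ω | ω e = translatePattern ω₀ m e} := by
    rw [hinner, Finset.prod_image fun _ _ _ _ h => (translateEdge_inj.1 h).2]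
    refine Finset.prod_congr rfl fun f _ => ?_
    rw [graphMeasure_real_eval_eq, translatePattern_translateEdge, edgeLength_translateEdge]
    rfl
  have houter : ∏ e ∈ edgesMeeting j \ inner, (1 - p (edgeLength e) : ℝ) =
      ∏ e ∈ edgesMeeting j \ inner,
        (graphMeasure p m).real {ω | ω e = translatePattern ω₀ m e} := by
    refine Finset.prod_congr rfl fun e he => ?_
    obtain ⟨hmeet, hnot⟩ := Finset.mem_sdiff.1 he
    have hfalse : ¬ translatePattern ω₀ m e = true := fun h => by
      obtain ⟨f, -, rfl⟩ := exists_translateEdge_eq hmeet h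
      exact hnot (Finset.mem_image_of_mem _ (Finset.mem_univ f))
    rw [graphMeasure_real_eval_eq, if_neg hfalse]
  rw [isolatedCopyEvent, measureReal_biInter_of_iIndepSet (iIndepSet_graphMeasure p _),
    ← Finset.prod_sdiff hsubset, ← Finset.prod_sdiff hsubset, ← houter, ← hweight, mul_comm]
  refine mul_le_mul_of_nonneg_right (mul_le_of_le_one_right ?_ ?_) ?_
  · exact Finset.prod_nonneg fun e _ => unitInterval.one_minus_nonneg _
  · exact Finset.prod_le_one (fun e _ => unitInterval.one_minus_nonneg _)
      fun e _ => unitInterval.one_minus_le_one _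
  · exact hweight ▸ Finset.prod_nonneg fun _ _ => measureReal_nonneg

theorem sum_correlation_edgesMeeting_le (hp : ∀ i, (p i : ℝ) < 1) (ω₀ : Sample n)
    (i : Fin (m / n)) :
    ∑ j ∈ Finset.univ.erase i, ∑ e ∈ edgesMeeting i ∩ edgesMeeting j,
        (1 - (graphMeasure p m).real {ω | ω e = translatePattern ω₀ m e}) ≤
      2 * n * nonedgeCost p m := by
  have hcross : ∀ j ∈ Finset.univ.erase i, ∀ e ∈ edgesMeeting i ∩ edgesMeeting j,
      1 - (graphMeasure p m).real {ω | ω e = translatePattern ω₀ m e} = p (edgeLength e) := by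
    intro j hj e he
    obtain ⟨hi, hj'⟩ := Finset.mem_inter.1 he
    rw [graphMeasure_real_eval_eq,
      translatePattern_eq_false (Finset.ne_of_mem_erase hj).symm ω₀ hi hj']
    simp
  calc
    _ = ∑ e ∈ (Finset.univ.erase i).biUnion fun j => edgesMeeting i ∩ edgesMeeting j,
        (p (edgeLength e) : ℝ) := by
      rw [Finset.sum_biUnion (pairwiseDisjoint_inter_edgesMeeting i)]
      exact Finset.sum_congr rfl fun j hj => Finset.sum_congr rfl (hcross j hj)
    _ ≤ ∑ e ∈ edgesMeeting i, (p (edgeLength e) : ℝ) :=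
      Finset.sum_le_sum_of_subset_of_nonneg
        (Finset.biUnion_subset.2 fun _ _ => Finset.inter_subset_left) fun e _ _ => (p _).2.1
    _ ≤ 2 * n * ∑ i ∈ Finset.Icc 1 m, (p i : ℝ) :=
      sum_edgeLength_edgesMeeting_le i fun i => (p i).2.1
    _ ≤ 2 * n * nonedgeCost p m := by
      gcongr
      exact sum_le_nonedgeCost hp m

theorem graphMeasure_real_not_dvd_le (hp : ∀ i, (p i : ℝ) < 1) {ω₀ : Sample n}
    (hω₀ : 0 < sampleWeight (fun i => p i) ω₀) (hn : 0 < n) (hnm : n ≤ m) (k : ℕ) :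
    (graphMeasure p m).real
        {ω | ¬ rankTheory k (sampleGraph ω₀) ∣ rankTheory k (sampleGraph ω)} ≤
      (1 + 2 * n * nonedgeCost p m) /
        ((m / n : ℕ) * (sampleWeight (fun i => p i) ω₀ *
          Real.exp (-(2 * n * nonedgeCost p m)))) := by
  have hmoment : (m / n : ℕ) * (sampleWeight (fun i => p i) ω₀ *
      Real.exp (-(2 * n * nonedgeCost p m))) ≤
      ∑ j, (graphMeasure p m).real (isolatedCopyEvent ω₀ j) := by
    simpa using Finset.card_nsmul_le_sum Finset.univ _ _ fun j _ =>
      (mul_le_mul_of_nonneg_left (exp_neg_nonedgeCost_le_prod hp j) hω₀.le).trans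
        (sampleWeight_mul_prod_le ω₀ j)
  have hpos : 0 < (m / n : ℕ) * (sampleWeight (fun i => p i) ω₀ *
      Real.exp (-(2 * n * nonedgeCost p m))) :=
    mul_pos (Nat.cast_pos.2 (Nat.div_pos hnm hn)) (mul_pos hω₀ (Real.exp_pos _))
  have hcost : 0 ≤ nonedgeCost p m := Finset.sum_nonneg fun i _ => neg_log_one_sub_nonneg (p i)
  calc
    _ ≤ (graphMeasure p m).real {ω | ∀ j ∈ Finset.univ, ω ∉ isolatedCopyEvent ω₀ j} := by
      refine measureReal_mono fun ω hω j _ hcopy => hω ?_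
      exact rankTheory_dvd_of_eq_translatePattern (j := j) (Set.mem_iInter₂.1 hcopy) k
    _ ≤ (1 + 2 * n * nonedgeCost p m) /
        ∑ j, (graphMeasure p m).real (isolatedCopyEvent ω₀ j) :=
      measureReal_forall_notMem_biInter_le (iIndepSet_graphMeasure p _) (fun _ => .of_discrete)
        (fun i _ => sum_correlation_edgesMeeting_le hp ω₀ i) (hpos.trans_le hmoment)
    _ ≤ _ := by gcongr

end IsolatedCopies

/-! ### The zero-one law -/

section Limit

open MeasureTheory Asymptotics

variable {p : ℕ → unitInterval}

theorem tendsto_exp_div_zero_of_isLittleO_log {a : ℕ → ℝ}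
    (ha : a =o[atTop] fun m : ℕ => Real.log m) :
    Tendsto (fun m : ℕ => Real.exp (a m) / m) atTop (nhds 0) := by
  have hlog : Tendsto (fun m : ℕ => Real.log m) atTop atTop :=
    Real.tendsto_log_atTop.comp tendsto_natCast_atTop_atTop
  have hdiff : Tendsto (fun m : ℕ => a m - Real.log m) atTop atBot := by
    have hequiv : (fun m : ℕ => Real.log m - a m) ~[atTop] fun m : ℕ => Real.log m :=
      IsEquivalent.refl.sub_isLittleO ha
    simpa only [Function.comp_def, neg_sub] using
      tendsto_neg_atTop_atBot.comp (hequiv.symm.tendsto_atTop hlog)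
  refine (Real.tendsto_exp_atBot.comp hdiff).congr' ?_
  filter_upwards [eventually_gt_atTop 0] with m hm
  simp only [Function.comp_apply, Real.exp_sub, Real.exp_log (Nat.cast_pos.2 hm)]

theorem one_add_div_le_exp_div {n m : ℕ} (hn : 0 < n) (hnm : n ≤ m) {x w : ℝ} (hw : 0 < w) :
    (1 + x) / ((m / n : ℕ) * (w * Real.exp (-x))) ≤ 2 * n / w * (Real.exp (2 * x) / m) := by
  have hm : (0 : ℝ) < m := Nat.cast_pos.2 (hn.trans_le hnm)
  have hquot : (0 : ℝ) < (m / n : ℕ) := Nat.cast_pos.2 (Nat.div_pos hnm hn)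
  have hfloor : (m : ℝ) ≤ 2 * n * (m / n : ℕ) := by
    have hlt := Nat.lt_mul_div_succ m hn
    have hone := Nat.div_pos hnm hn
    exact_mod_cast (by nlinarith : m ≤ 2 * n * (m / n))
  calc
    _ ≤ Real.exp x / ((m / n : ℕ) * (w * Real.exp (-x))) := by
      gcongr
      linarith [Real.add_one_le_exp x]
    _ = Real.exp (2 * x) / w * (1 / (m / n : ℕ)) := by
      rw [Real.exp_neg, two_mul, Real.exp_add]
      field_simp
    _ ≤ Real.exp (2 * x) / w * (2 * n / m) := by
      refine mul_le_mul_of_nonneg_left ?_ (by positivity)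
      rwa [div_le_div_iff₀ hquot hm, one_mul]
    _ = 2 * n / w * (Real.exp (2 * x) / m) := by ring

theorem tendsto_graphMeasure_real_not_dvd (hp : ∀ i, (p i : ℝ) < 1)
    (hcost : nonedgeCost p =o[atTop] fun m : ℕ => Real.log m) {n : ℕ} {ω₀ : Sample n}
    (hω₀ : graphMeasure p n {ω₀} ≠ 0) (k : ℕ) :
    Tendsto (fun m => (graphMeasure p m).real
      {ω | ¬ rankTheory k (sampleGraph ω₀) ∣ rankTheory k (sampleGraph ω)}) atTop (nhds 0) := by
  obtain rfl | hn := n.eq_zero_or_pos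
  · simp [rankTheory_eq_one k (sampleGraph ω₀)]
  have hweight : 0 < sampleWeight (fun i => p i) ω₀ := by
    rw [← graphMeasure_real_singleton]
    exact ENNReal.toReal_pos hω₀ (measure_ne_top _ _)
  have hlim : Tendsto (fun m : ℕ => 2 * n / sampleWeight (fun i => p i) ω₀ *
      (Real.exp (2 * (2 * n * nonedgeCost p m)) / m)) atTop (nhds 0) := by
    simpa using (tendsto_exp_div_zero_of_isLittleO_log
      ((hcost.const_mul_left (2 * n)).const_mul_left 2)).const_mul _
  refine squeeze_zero' (.of_forall fun m => measureReal_nonneg) ?_ hlim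
  filter_upwards [eventually_ge_atTop n] with m hnm
  exact (graphMeasure_real_not_dvd_le hp hweight hn hnm k).trans
    (one_add_div_le_exp_div hn hnm hweight)

/-- The rank-`k` theories of the graphs that occur in `G(n, p̄)` with positive probability for
some `n`. -/
def attainableTheories (p : ℕ → unitInterval) (k : ℕ) : Set (RankTheory k) :=
  {t | ∃ (n : ℕ) (ω : Sample n), graphMeasure p n {ω} ≠ 0 ∧ rankTheory k (sampleGraph ω) = t}

theorem ae_mem_attainableTheories (p : ℕ → unitInterval) (k m : ℕ) :
    ∀ᵐ ω ∂graphMeasure p m, rankTheory k (sampleGraph ω) ∈ attainableTheories p k :=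
  ae_iff_of_countable.2 fun ω hω => ⟨m, ω, hω, rfl⟩

theorem tendsto_graphMeasure_real_exists_not_dvd (hp : ∀ i, (p i : ℝ) < 1)
    (hcost : nonedgeCost p =o[atTop] fun m : ℕ => Real.log m) (k : ℕ) :
    Tendsto (fun m => (graphMeasure p m).real
      {ω | ∃ t ∈ attainableTheories p k, ¬ t ∣ rankTheory k (sampleGraph ω)}) atTop (nhds 0) := by
  have hfin : (attainableTheories p k).Finite := Set.toFinite _
  have hsum : Tendsto (fun m => ∑ t ∈ hfin.toFinset, (graphMeasure p m).real
      {ω | ¬ t ∣ rankTheory k (sampleGraph ω)}) atTop (nhds 0) := by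
    rw [← Finset.sum_const_zero (s := hfin.toFinset)]
    refine tendsto_finsetSum _ fun t ht => ?_
    obtain ⟨n, ω₀, hω₀, rfl⟩ := hfin.mem_toFinset.1 ht
    exact tendsto_graphMeasure_real_not_dvd hp hcost hω₀ k
  refine squeeze_zero (fun m => measureReal_nonneg) (fun m => ?_) hsum
  refine le_trans (measureReal_mono (fun ω => ?_) (measure_ne_top _ _))
    (measureReal_biUnion_finset_le _ _)
  simp

theorem exists_attainable_greatest (hp : ∀ i, (p i : ℝ) < 1)
    (hcost : nonedgeCost p =o[atTop] fun m : ℕ => Real.log m) (k : ℕ) :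
    ∃ t ∈ attainableTheories p k, ∀ s ∈ attainableTheories p k, s ∣ t := by
  obtain ⟨m, hm⟩ := ((tendsto_graphMeasure_real_exists_not_dvd hp hcost k).eventually_lt_const
    zero_lt_one).exists
  have hfreq : ∃ᵐ ω ∂graphMeasure p m,
      ∀ s ∈ attainableTheories p k, s ∣ rankTheory k (sampleGraph ω) := by
    intro hae
    refine hm.ne ?_
    rw [measureReal_congr (eventuallyEq_univ.2 ?_), probReal_univ]
    filter_upwards [hae] with ω hω
    simpa using hω
  obtain ⟨ω, hgreatest, hattain⟩ := (hfreq.and_eventually (ae_mem_attainableTheories p k m)).exists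
  exact ⟨_, hattain, hgreatest⟩

theorem exists_tendsto_graphMeasure_real_ne (hp : ∀ i, (p i : ℝ) < 1)
    (hcost : nonedgeCost p =o[atTop] fun m : ℕ => Real.log m) (k : ℕ) :
    ∃ (n : ℕ) (ω₁ : Sample n), Tendsto (fun m => (graphMeasure p m).real
      {ω | rankTheory k (sampleGraph ω) ≠ rankTheory k (sampleGraph ω₁)}) atTop (nhds 0) := by
  obtain ⟨_, ⟨n, ω₁, hω₁, rfl⟩, hgreatest⟩ := exists_attainable_greatest hp hcost k
  refine ⟨n, ω₁, (tendsto_graphMeasure_real_not_dvd hp hcost hω₁ k).congr fun m => ?_⟩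
  refine measureReal_congr ?_
  filter_upwards [ae_mem_attainableTheories p k m] with ω hω
  refine propext (not_congr ⟨fun hdvd => ?_, fun h => h ▸ dvd_rfl⟩)
  exact RankTheory.dvd_antisymm (hgreatest _ hω) hdvd

theorem isLittleO_nonedgeCost_log (hp : ∀ i, (p i : ℝ) < 1)
    (hlog : Tendsto (fun n : ℕ => Real.log (∏ i ∈ Finset.Icc 1 n, (1 - p i : ℝ)) / Real.log n)
      atTop (nhds 0)) :
    nonedgeCost p =o[atTop] fun m : ℕ => Real.log m := by
  have hneg (m : ℕ) : -Real.log (∏ i ∈ Finset.Icc 1 m, (1 - p i : ℝ)) = nonedgeCost p m := by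
    rw [nonedgeCost, Finset.sum_neg_distrib, Real.log_prod fun i _ => (sub_pos.2 (hp i)).ne']
  simp only [← funext hneg, isLittleO_neg_left]
  refine (isLittleO_iff_tendsto' ?_).2 hlog
  filter_upwards [eventually_gt_atTop 1] with m hm hzero
  exact absurd hzero (Real.log_pos (Nat.one_lt_cast.2 hm)).ne'

theorem tendsto_measureReal_zero_or_one {Ω : ℕ → Type*} [∀ m, MeasurableSpace (Ω m)]
    {μ : ∀ m, Measure (Ω m)} [∀ m, IsProbabilityMeasure (μ m)] {A : ∀ m, Set (Ω m)}
    (hA : ∀ m, MeasurableSet (A m)) {q : Prop}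
    (h : Tendsto (fun m => (μ m).real {ω | ¬ (ω ∈ A m ↔ q)}) atTop (nhds 0)) :
    Tendsto (fun m => (μ m).real (A m)) atTop (nhds 0) ∨
      Tendsto (fun m => (μ m).real (A m)) atTop (nhds 1) := by
  by_cases hq : q
  · right
    have hcompl (m : ℕ) : {ω | ¬ (ω ∈ A m ↔ q)} = (A m)ᶜ := by
      ext ω
      simp [hq]
    simpa [hcompl, probReal_compl_eq_one_sub (hA _)] using h.const_sub 1
  · left
    simpa [hq] using h

end Limit

/-- If `0 ≤ p i < 1` for all `i` and
`log (∏_{i=1}^n (1 - p i)) / log n → 0`, then for every first-order sentence `ψ` of the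
language `L` of graphs, `Prob(n, p̄; ψ)` tends to `0` or to `1` as `n → ∞`. -/
theorem statement_0 (p : ℕ → ℝ) (hp : ∀ i, 0 ≤ p i ∧ p i < 1)
    (hlog : Tendsto
      (fun n : ℕ => Real.log (∏ i ∈ Finset.Icc 1 n, (1 - p i)) / Real.log n) atTop (nhds 0))
    (ψ : Language.graph.Sentence) :
    Tendsto (fun n => ProbL p n ψ) atTop (nhds 0) ∨
      Tendsto (fun n => ProbL p n ψ) atTop (nhds 1) := by
  lift p to ℕ → unitInterval using fun i => ⟨(hp i).1, (hp i).2.le⟩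
  have hp' (i : ℕ) : (p i : ℝ) < 1 := (hp i).2
  obtain ⟨n, ω₁, hlim⟩ := exists_tendsto_graphMeasure_real_ne hp'
    (isLittleO_nonedgeCost_log hp' hlog) (quantifierRank ψ)
  have hdecided : Tendsto (fun m => (graphMeasure p m).real {ω | ¬ (SatL ω ψ ↔ SatL ω₁ ψ)})
      atTop (nhds 0) :=
    squeeze_zero (fun _ => MeasureTheory.measureReal_nonneg)
      (fun _ => MeasureTheory.measureReal_mono fun _ => mt satL_iff_of_rankTheory_eq) hlim
  simp only [ProbL, Pr_eq_graphMeasure_real]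
  exact tendsto_measureReal_zero_or_one (fun _ => .of_discrete) hdecided

end RandomGraph
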